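/- arXiv:2104.04589 — 2 statements merged into one kernel-verified Lean document; each statement's English description precedes it below -/
import Mathlib

section
/- Strong normalization of λPRK: every typable term of λPRK is strongly normalizing, i.e., if Γ ⊢ t : P is derivable then there is no infinite reduction sequence t → t₁ → t₂ → ⋯ starting from t. -/
/-!
Strong normalization is proved by reducibility candidates over untyped terms. A strong type is
interpreted by the strongly normalizing terms all of whose introduction-form reducts are built from
terms in the candidates of the premises of the introduction rule.

The classical types satisfy `A⊕ ≅ (A⊖ → A⁺)` and `A⊖ ≅ (A⊕ → A⁻)`, a recursion that is not well
founded. But the arrow is antitone in its domain, so `X ↦ ((X → A⁻) → A⁺)` is monotone; its least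
fixed point (Knaster–Tarski) interprets `A⊕`, and `A⊕ → A⁻` then interprets `A⊖`.

Since `abs_Q(t,s)` reduces only to terms of the same shape, all of them neutral, it lies in every
candidate as soon as it is strongly normalizing. For `t`, `s` in the candidates of `A⁺`, `A⁻` this
holds by induction on `A`: contracting `abs_Q(t,s)` at the root gives `abs_Q(t' • s', s' • t')` with
`t'`, `s'` in the candidates of the two classical types of an immediate subformula, and both
applications lie in the candidates of its strong types.
-/

/-- Pure propositions: A ::= α | A∧B | A∨B | ¬A -/
inductive PureProp : Type
  | var : ℕ → PureProp
  | conj : PureProp → PureProp → PureProp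
  | disj : PureProp → PureProp → PureProp
  | neg : PureProp → PureProp
  deriving DecidableEq

/-- Moded propositions: A⁺ (sp), A⁻ (sn), A⊕ (cp), A⊖ (cn). -/
inductive MProp : Type
  | sp : PureProp → MProp
  | sn : PureProp → MProp
  | cp : PureProp → MProp
  | cn : PureProp → MProp
  deriving DecidableEq

/-- The opposite P~: flips the sign, keeps the strength. -/
def MProp.opp : MProp → MProp
  | .sp A => .sn A
  | .sn A => .sp A
  | .cp A => .cn A
  | .cn A => .cp A

def MProp.isStrong : MProp → Prop
  | .sp _ => True
  | .sn _ => True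
  | .cp _ => False
  | .cn _ => False

def MProp.isClassical : MProp → Prop
  | .sp _ => False
  | .sn _ => False
  | .cp _ => True
  | .cn _ => True

inductive Sign : Type | pos | neg
  deriving DecidableEq

def Sign.flip : Sign → Sign
  | .pos => .neg
  | .neg => .pos

/-- Terms of λPRK, with de Bruijn indices for bound variables
    (a faithful rendering of terms modulo α-renaming). -/
inductive Tm : Type
  | var : ℕ → Tm
  | abs : MProp → Tm → Tm → Tm                    -- abs_P(t,s)
  | pair : Sign → Tm → Tm → Tm                    -- ⟨t,s⟩±
  | proj : Sign → Bool → Tm → Tm                  -- πᵢ±(t), i encoded by a Bool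
  | inj : Sign → Bool → Tm → Tm                   -- inᵢ±(t)
  | case : Sign → Tm → MProp → Tm → MProp → Tm → Tm  -- case±(t, x:P.s, y:Q.u)
  | negi : Sign → Tm → Tm                         -- ¬i±(t)
  | nege : Sign → Tm → Tm                         -- ¬e±(t)
  | lam : Sign → MProp → Tm → Tm                  -- λ±x:P.t
  | app : Sign → Tm → Tm → Tm                     -- t •± s
  deriving DecidableEq

/-- Shift free de Bruijn indices ≥ c up by d. -/
def Tm.shift (d : ℕ) : ℕ → Tm → Tm
  | c, .var k => if k < c then .var k else .var (k + d)
  | c, .abs P t s => .abs P (Tm.shift d c t) (Tm.shift d c s)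
  | c, .pair sg t s => .pair sg (Tm.shift d c t) (Tm.shift d c s)
  | c, .proj sg i t => .proj sg i (Tm.shift d c t)
  | c, .inj sg i t => .inj sg i (Tm.shift d c t)
  | c, .case sg t P s Q u =>
      .case sg (Tm.shift d c t) P (Tm.shift d (c+1) s) Q (Tm.shift d (c+1) u)
  | c, .negi sg t => .negi sg (Tm.shift d c t)
  | c, .nege sg t => .nege sg (Tm.shift d c t)
  | c, .lam sg P t => .lam sg P (Tm.shift d (c+1) t)
  | c, .app sg t s => .app sg (Tm.shift d c t) (Tm.shift d c s)

/-- Capture-avoiding substitution t[j := s]. -/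
def Tm.subst : Tm → ℕ → Tm → Tm
  | .var k, j, s => if k = j then s else if j < k then .var (k - 1) else .var k
  | .abs P t u, j, s => .abs P (Tm.subst t j s) (Tm.subst u j s)
  | .pair sg t u, j, s => .pair sg (Tm.subst t j s) (Tm.subst u j s)
  | .proj sg i t, j, s => .proj sg i (Tm.subst t j s)
  | .inj sg i t, j, s => .inj sg i (Tm.subst t j s)
  | .case sg t P u Q v, j, s =>
      .case sg (Tm.subst t j s) P (Tm.subst u (j+1) (Tm.shift 1 0 s)) Q (Tm.subst v (j+1) (Tm.shift 1 0 s))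
  | .negi sg t, j, s => .negi sg (Tm.subst t j s)
  | .nege sg t, j, s => .nege sg (Tm.subst t j s)
  | .lam sg P t, j, s => .lam sg P (Tm.subst t (j+1) (Tm.shift 1 0 s))
  | .app sg t u, j, s => .app sg (Tm.subst t j s) (Tm.subst u j s)

/-- abs'(t,s): for t of classical type of sign sg and s of the opposite classical type,
    abs'(t,s) = abs(t •sg s, s •(flip sg) t). -/
def absE (Q : MProp) (sg : Sign) (t s : Tm) : Tm :=
  Tm.abs Q (Tm.app sg t s) (Tm.app sg.flip s t)

/-- One-step reduction of λPRK, closed under arbitrary contexts. -/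
inductive Red : Tm → Tm → Prop
  | proj1 {sg t1 t2} : Red (.proj sg false (.pair sg t1 t2)) t1
  | proj2 {sg t1 t2} : Red (.proj sg true (.pair sg t1 t2)) t2
  | case1 {sg t P Q s1 s2} : Red (.case sg (.inj sg false t) P s1 Q s2) (Tm.subst s1 0 t)
  | case2 {sg t P Q s1 s2} : Red (.case sg (.inj sg true t) P s1 Q s2) (Tm.subst s2 0 t)
  | negRed {sg t} : Red (.nege sg (.negi sg t)) t
  | beta {sg P t s} : Red (.app sg (.lam sg P t) s) (Tm.subst t 0 s)
  | absPairInj1 {Q sg t1 t2 s} :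
      Red (.abs Q (.pair sg t1 t2) (.inj sg.flip false s)) (absE Q sg t1 s)
  | absPairInj2 {Q sg t1 t2 s} :
      Red (.abs Q (.pair sg t1 t2) (.inj sg.flip true s)) (absE Q sg t2 s)
  | absInjPair1 {Q sg t s1 s2} :
      Red (.abs Q (.inj sg false t) (.pair sg.flip s1 s2)) (absE Q sg t s1)
  | absInjPair2 {Q sg t s1 s2} :
      Red (.abs Q (.inj sg true t) (.pair sg.flip s1 s2)) (absE Q sg t s2)
  | absNeg {Q sg t s} :
      Red (.abs Q (.negi sg t) (.negi sg.flip s)) (absE Q sg.flip t s)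
  | absCL {Q t t' s} : Red t t' → Red (.abs Q t s) (.abs Q t' s)
  | absCR {Q t s s'} : Red s s' → Red (.abs Q t s) (.abs Q t s')
  | pairCL {sg t t' s} : Red t t' → Red (.pair sg t s) (.pair sg t' s)
  | pairCR {sg t s s'} : Red s s' → Red (.pair sg t s) (.pair sg t s')
  | projC {sg i t t'} : Red t t' → Red (.proj sg i t) (.proj sg i t')
  | injC {sg i t t'} : Red t t' → Red (.inj sg i t) (.inj sg i t')
  | caseC1 {sg t t' P s Q u} : Red t t' → Red (.case sg t P s Q u) (.case sg t' P s Q u)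
  | caseC2 {sg t P s s' Q u} : Red s s' → Red (.case sg t P s Q u) (.case sg t P s' Q u)
  | caseC3 {sg t P s Q u u'} : Red u u' → Red (.case sg t P s Q u) (.case sg t P s Q u')
  | negiC {sg t t'} : Red t t' → Red (.negi sg t) (.negi sg t')
  | negeC {sg t t'} : Red t t' → Red (.nege sg t) (.nege sg t')
  | lamC {sg P t t'} : Red t t' → Red (.lam sg P t) (.lam sg P t')
  | appCL {sg t t' s} : Red t t' → Red (.app sg t s) (.app sg t' s)
  | appCR {sg t s s'} : Red s s' → Red (.app sg t s) (.app sg t s')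

/-- Zero-or-more-step reduction. -/
def RedStar : Tm → Tm → Prop := Relation.ReflTransGen Red

/-- The λPRK typing judgment Γ ⊢ t : P.  Contexts are lists (de Bruijn). -/
inductive TJ : List MProp → Tm → MProp → Prop
  | var {Γ : List MProp} {n P} : Γ[n]? = some P → TJ Γ (.var n) P
  | absT {Γ t s P Q} : MProp.isStrong P → TJ Γ t P → TJ Γ s P.opp → TJ Γ (.abs Q t s) Q
  | pairP {Γ t s A B} : TJ Γ t (MProp.cp A) → TJ Γ s (MProp.cp B) →
      TJ Γ (.pair .pos t s) (MProp.sp (PureProp.conj A B))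
  | pairN {Γ t s A B} : TJ Γ t (MProp.cn A) → TJ Γ s (MProp.cn B) →
      TJ Γ (.pair .neg t s) (MProp.sn (PureProp.disj A B))
  | projP1 {Γ t A B} : TJ Γ t (MProp.sp (PureProp.conj A B)) → TJ Γ (.proj .pos false t) (MProp.cp A)
  | projP2 {Γ t A B} : TJ Γ t (MProp.sp (PureProp.conj A B)) → TJ Γ (.proj .pos true t) (MProp.cp B)
  | projN1 {Γ t A B} : TJ Γ t (MProp.sn (PureProp.disj A B)) → TJ Γ (.proj .neg false t) (MProp.cn A)
  | projN2 {Γ t A B} : TJ Γ t (MProp.sn (PureProp.disj A B)) → TJ Γ (.proj .neg true t) (MProp.cn B)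
  | injP1 {Γ t A B} : TJ Γ t (MProp.cp A) → TJ Γ (.inj .pos false t) (MProp.sp (PureProp.disj A B))
  | injP2 {Γ t A B} : TJ Γ t (MProp.cp B) → TJ Γ (.inj .pos true t) (MProp.sp (PureProp.disj A B))
  | injN1 {Γ t A B} : TJ Γ t (MProp.cn A) → TJ Γ (.inj .neg false t) (MProp.sn (PureProp.conj A B))
  | injN2 {Γ t A B} : TJ Γ t (MProp.cn B) → TJ Γ (.inj .neg true t) (MProp.sn (PureProp.conj A B))
  | caseP {Γ t s u A B P} : TJ Γ t (MProp.sp (PureProp.disj A B)) →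
      TJ (MProp.cp A :: Γ) s P → TJ (MProp.cp B :: Γ) u P →
      TJ Γ (.case .pos t (MProp.cp A) s (MProp.cp B) u) P
  | caseN {Γ t s u A B P} : TJ Γ t (MProp.sn (PureProp.conj A B)) →
      TJ (MProp.cn A :: Γ) s P → TJ (MProp.cn B :: Γ) u P →
      TJ Γ (.case .neg t (MProp.cn A) s (MProp.cn B) u) P
  | negiP {Γ t A} : TJ Γ t (MProp.cn A) → TJ Γ (.negi .pos t) (MProp.sp (PureProp.neg A))
  | negiN {Γ t A} : TJ Γ t (MProp.cp A) → TJ Γ (.negi .neg t) (MProp.sn (PureProp.neg A))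
  | negeP {Γ t A} : TJ Γ t (MProp.sp (PureProp.neg A)) → TJ Γ (.nege .pos t) (MProp.cn A)
  | negeN {Γ t A} : TJ Γ t (MProp.sn (PureProp.neg A)) → TJ Γ (.nege .neg t) (MProp.cp A)
  | lamP {Γ t A} : TJ (MProp.cn A :: Γ) t (MProp.sp A) → TJ Γ (.lam .pos (MProp.cn A) t) (MProp.cp A)
  | lamN {Γ t A} : TJ (MProp.cp A :: Γ) t (MProp.sn A) → TJ Γ (.lam .neg (MProp.cp A) t) (MProp.cn A)
  | appP {Γ t s A} : TJ Γ t (MProp.cp A) → TJ Γ s (MProp.cn A) → TJ Γ (.app .pos t s) (MProp.sp A)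
  | appN {Γ t s A} : TJ Γ t (MProp.cn A) → TJ Γ s (MProp.cp A) → TJ Γ (.app .neg t s) (MProp.sn A)

/-! ### Parallel substitution -/

/-- The renaming `ρ` carried under a binder. -/
def upRen (ρ : ℕ → ℕ) : ℕ → ℕ
  | 0 => 0
  | k + 1 => ρ k + 1

/-- Simultaneous renaming of the free variables of a term. -/
def Tm.rename : Tm → (ℕ → ℕ) → Tm
  | .var k, ρ => .var (ρ k)
  | .abs P t u, ρ => .abs P (t.rename ρ) (u.rename ρ)
  | .pair sg t u, ρ => .pair sg (t.rename ρ) (u.rename ρ)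
  | .proj sg i t, ρ => .proj sg i (t.rename ρ)
  | .inj sg i t, ρ => .inj sg i (t.rename ρ)
  | .case sg t P u Q v, ρ =>
      .case sg (t.rename ρ) P (u.rename (upRen ρ)) Q (v.rename (upRen ρ))
  | .negi sg t, ρ => .negi sg (t.rename ρ)
  | .nege sg t, ρ => .nege sg (t.rename ρ)
  | .lam sg P t, ρ => .lam sg P (t.rename (upRen ρ))
  | .app sg t u, ρ => .app sg (t.rename ρ) (u.rename ρ)

/-- The parallel substitution `σ` carried under a binder. -/
def upSubst (σ : ℕ → Tm) : ℕ → Tm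
  | 0 => .var 0
  | k + 1 => (σ k).rename Nat.succ

/-- Simultaneous capture-avoiding substitution for all free variables of a term. -/
def Tm.psubst : Tm → (ℕ → Tm) → Tm
  | .var k, σ => σ k
  | .abs P t u, σ => .abs P (t.psubst σ) (u.psubst σ)
  | .pair sg t u, σ => .pair sg (t.psubst σ) (u.psubst σ)
  | .proj sg i t, σ => .proj sg i (t.psubst σ)
  | .inj sg i t, σ => .inj sg i (t.psubst σ)
  | .case sg t P u Q v, σ =>
      .case sg (t.psubst σ) P (u.psubst (upSubst σ)) Q (v.psubst (upSubst σ))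
  | .negi sg t, σ => .negi sg (t.psubst σ)
  | .nege sg t, σ => .nege sg (t.psubst σ)
  | .lam sg P t, σ => .lam sg P (t.psubst (upSubst σ))
  | .app sg t u, σ => .app sg (t.psubst σ) (u.psubst σ)

/-- The parallel substitution sending the variable `0` to `s` and `k + 1` to `σ k`. -/
def consSubst (s : Tm) (σ : ℕ → Tm) : ℕ → Tm
  | 0 => s
  | k + 1 => σ k

/-- The renaming effected by `Tm.shift d c`. -/
def shiftRen (d c k : ℕ) : ℕ := if k < c then k else k + d

/-- The parallel substitution effected by `Tm.subst · j s`. -/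
def singleSubst (j : ℕ) (s : Tm) (k : ℕ) : Tm :=
  if k = j then s else if j < k then .var (k - 1) else .var k

section Algebra

variable (t s : Tm) (ρ ρ' : ℕ → ℕ) (σ τ : ℕ → Tm)

theorem upRen_shiftRen (d c : ℕ) : upRen (shiftRen d c) = shiftRen d (c + 1) := by
  funext k
  cases k with
  | zero => simp [upRen, shiftRen]
  | succ k => simp only [upRen, shiftRen]; split_ifs <;> omega

theorem Tm.shift_eq_rename (d c : ℕ) : t.shift d c = t.rename (shiftRen d c) := by
  induction t generalizing c with
  | var k => simp only [Tm.shift, Tm.rename, shiftRen]; split_ifs <;> rfl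
  | _ => simp_all only [Tm.shift, Tm.rename, upRen_shiftRen]

theorem upSubst_singleSubst (j : ℕ) :
    upSubst (singleSubst j s) = singleSubst (j + 1) (s.shift 1 0) := by
  have hshift : s.shift 1 0 = s.rename Nat.succ := s.shift_eq_rename 1 0
  funext k
  cases k with
  | zero => simp [upSubst, singleSubst]
  | succ k =>
    simp only [upSubst, singleSubst, hshift]
    split_ifs <;> first | omega | rfl | (simp only [Tm.rename]; congr 1; omega)

theorem Tm.subst_eq_psubst (j : ℕ) : t.subst j s = t.psubst (singleSubst j s) := by
  induction t generalizing j s with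
  | var k => rfl
  | _ => simp_all only [Tm.subst, Tm.psubst, upSubst_singleSubst]

theorem upRen_upRen : (fun k => upRen ρ' (upRen ρ k)) = upRen fun k => ρ' (ρ k) := by
  funext k; cases k <;> rfl

theorem Tm.rename_rename : (t.rename ρ).rename ρ' = t.rename fun k => ρ' (ρ k) := by
  induction t generalizing ρ ρ' <;> simp_all only [Tm.rename, upRen_upRen]

theorem upSubst_upRen : (fun k => upSubst σ (upRen ρ k)) = upSubst fun k => σ (ρ k) := by
  funext k; cases k <;> rfl

theorem Tm.psubst_rename : (t.rename ρ).psubst σ = t.psubst fun k => σ (ρ k) := by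
  induction t generalizing ρ σ <;> simp_all only [Tm.rename, Tm.psubst, upSubst_upRen]

theorem rename_upSubst :
    (fun k => (upSubst σ k).rename (upRen ρ)) = upSubst fun k => (σ k).rename ρ := by
  funext k
  cases k with
  | zero => rfl
  | succ k => simp only [upSubst, Tm.rename_rename]; rfl

theorem Tm.rename_psubst : (t.psubst σ).rename ρ = t.psubst fun k => (σ k).rename ρ := by
  induction t generalizing ρ σ <;> simp_all only [Tm.rename, Tm.psubst, rename_upSubst]

theorem psubst_upSubst :
    (fun k => (upSubst σ k).psubst (upSubst τ)) = upSubst fun k => (σ k).psubst τ := by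
  funext k
  cases k with
  | zero => rfl
  | succ k => simp only [upSubst, Tm.psubst_rename, Tm.rename_psubst]

theorem Tm.psubst_psubst : (t.psubst σ).psubst τ = t.psubst fun k => (σ k).psubst τ := by
  induction t generalizing σ τ <;> simp_all only [Tm.psubst, psubst_upSubst]

theorem upSubst_var : upSubst Tm.var = Tm.var := by
  funext k; cases k <;> rfl

theorem Tm.psubst_var : t.psubst Tm.var = t := by
  induction t <;> simp_all only [Tm.psubst, upSubst_var]

theorem singleSubst_zero : singleSubst 0 s = consSubst s Tm.var := by
  funext k; cases k <;> simp [singleSubst, consSubst]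

theorem Tm.subst_psubst_upSubst :
    (t.psubst (upSubst σ)).subst 0 s = t.psubst (consSubst s σ) := by
  rw [Tm.subst_eq_psubst, singleSubst_zero, Tm.psubst_psubst]
  congr 1; funext k
  cases k with
  | zero => rfl
  | succ k => exact (Tm.psubst_rename _ _ _).trans (Tm.psubst_var _)

theorem Tm.psubst_subst :
    (t.subst 0 s).psubst σ = (t.psubst (upSubst σ)).subst 0 (s.psubst σ) := by
  rw [Tm.subst_psubst_upSubst, Tm.subst_eq_psubst, singleSubst_zero, Tm.psubst_psubst]
  congr 1; funext k
  cases k <;> rfl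

end Algebra

theorem Red.psubst {t t' : Tm} (h : Red t t') (σ : ℕ → Tm) : Red (t.psubst σ) (t'.psubst σ) := by
  induction h generalizing σ <;>
    simp only [Tm.psubst_subst, Tm.psubst, absE] <;>
    first
      | (constructor; done)
      | (constructor; apply_assumption)

theorem Red.subst {t t' : Tm} (h : Red t t') (j : ℕ) (s : Tm) :
    Red (t.subst j s) (t'.subst j s) := by
  simpa only [Tm.subst_eq_psubst] using h.psubst (singleSubst j s)

/-! ### Strong normalization -/

/-- Strong normalization, as accessibility for the converse of reduction. -/
def SN (t : Tm) : Prop := Acc (fun a b => Red b a) t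

section SN

variable {t s : Tm} {sg : Sign}

theorem SN.of_psubst {σ : ℕ → Tm} (h : SN (t.psubst σ)) : SN t := by
  generalize hu : t.psubst σ = u at h
  induction h generalizing t with
  | intro u _ ih =>
    subst hu
    exact ⟨_, fun t' ht' => ih _ (ht'.psubst σ) rfl⟩

theorem SN.of_subst {j : ℕ} (h : SN (t.subst j s)) : SN t := by
  rw [Tm.subst_eq_psubst] at h; exact h.of_psubst

theorem SN.pair (ht : SN t) (hs : SN s) : SN (.pair sg t s) := by
  induction ht generalizing s with
  | intro t _ iht =>
    induction hs with
    | intro s hs ihs =>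
      refine ⟨_, fun r hr => ?_⟩
      cases hr with
      | pairCL h => exact iht _ h ⟨_, hs⟩
      | pairCR h => exact ihs _ h

theorem SN.inj {i : Bool} (ht : SN t) : SN (.inj sg i t) := by
  induction ht with
  | intro t _ ih => exact ⟨_, fun r hr => by cases hr with | injC h => exact ih _ h⟩

theorem SN.negi (ht : SN t) : SN (.negi sg t) := by
  induction ht with
  | intro t _ ih => exact ⟨_, fun r hr => by cases hr with | negiC h => exact ih _ h⟩

theorem SN.lam {P : MProp} (ht : SN t) : SN (.lam sg P t) := by
  induction ht with
  | intro t _ ih => exact ⟨_, fun r hr => by cases hr with | lamC h => exact ih _ h⟩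

end SN

/-! ### Reducibility candidates -/

/-- Neutral terms: those that are not introduction forms. -/
def Tm.IsNeutral : Tm → Prop
  | .pair .. | .inj .. | .negi .. | .lam .. => False
  | .var _ | .abs .. | .proj .. | .case .. | .nege .. | .app .. => True

/-- Girard's reducibility candidates: sets of terms satisfying (CR1), (CR2) and (CR3). -/
class IsCandidate (X : Set Tm) : Prop where
  sn {t} : t ∈ X → SN t
  red {t t'} : t ∈ X → Red t t' → t' ∈ X
  of_neutral {t : Tm} : t.IsNeutral → (∀ t', Red t t' → t' ∈ X) → t ∈ X

/-- The candidate determined by a set `W` of introduction forms: the strongly normalizing terms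
that reduce to no introduction form outside `W`. -/
def introCand (W : Set Tm) : Set Tm :=
  {t | SN t ∧ ∀ u, RedStar t u → u.IsNeutral ∨ u ∈ W}

instance (W : Set Tm) : IsCandidate (introCand W) where
  sn ht := ht.1
  red ht h := ⟨ht.1.inv h, fun u hu => ht.2 u (.head h hu)⟩
  of_neutral hn h := by
    refine ⟨⟨_, fun t' ht' => (h t' ht').1⟩, fun u hu => ?_⟩
    rcases hu.cases_head with rfl | ⟨t', ht', hu⟩
    · exact .inl hn
    · exact (h t' ht').2 u hu

theorem isNeutral_or_mem_of_mem_introCand {W : Set Tm} {t : Tm} (ht : t ∈ introCand W) :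
    t.IsNeutral ∨ t ∈ W :=
  ht.2 t .refl

theorem subset_introCand {W : Set Tm} (hsn : ∀ t ∈ W, SN t)
    (hred : ∀ t ∈ W, ∀ t', Red t t' → t' ∈ W) : W ⊆ introCand W := by
  refine fun t ht => ⟨hsn t ht, fun u hu => .inr ?_⟩
  induction hu with
  | refl => exact ht
  | tail _ h ih => exact hred _ ih _ h

theorem introCand_mono {W W' : Set Tm} (h : W ⊆ W') : introCand W ⊆ introCand W' :=
  fun _ ht => ⟨ht.1, fun u hu => (ht.2 u hu).imp_right (@h u)⟩

theorem IsCandidate.var_mem (X : Set Tm) [IsCandidate X] (n : ℕ) : .var n ∈ X :=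
  of_neutral trivial fun _ h => nomatch h

/-- The candidate of the pairs with components in `X` and `Y`. -/
abbrev pairCand (sg : Sign) (X Y : Set Tm) : Set Tm := introCand (Set.image2 (Tm.pair sg) X Y)

/-- The candidate of the first injections from `X` and the second injections from `Y`. -/
abbrev injCand (sg : Sign) (X Y : Set Tm) : Set Tm :=
  introCand {u | ∃ i, ∃ t ∈ bif i then Y else X, u = .inj sg i t}

/-- The candidate of the negation introductions on terms in `X`. -/
abbrev negCand (sg : Sign) (X : Set Tm) : Set Tm := introCand (Tm.negi sg '' X)

/-- The candidate of the abstractions mapping `X` into `S`. -/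
abbrev lamCand (sg : Sign) (X S : Set Tm) : Set Tm :=
  introCand {t | ∃ P b, t = .lam sg P b ∧ ∀ s ∈ X, b.subst 0 s ∈ S}

theorem lamCand_antitone {sg : Sign} {X X' S : Set Tm} (h : X ⊆ X') :
    lamCand sg X' S ⊆ lamCand sg X S :=
  introCand_mono fun _ ⟨P, b, hb, hS⟩ => ⟨P, b, hb, fun s hs => hS s (h hs)⟩

theorem red_forall_subst_mem {X Y : Set Tm} [IsCandidate Y] {t t' : Tm}
    (h : ∀ s ∈ X, t.subst 0 s ∈ Y) (hr : Red t t') : ∀ s ∈ X, t'.subst 0 s ∈ Y :=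
  fun s hs => IsCandidate.red (h s hs) (hr.subst 0 s)

/-! ### Introductions and eliminations in candidates -/

section Connectives

variable {sg : Sign} {X Y Z : Set Tm} [IsCandidate X] [IsCandidate Y] [IsCandidate Z]
  {t s u : Tm} {P Q : MProp}

instance (i : Bool) : IsCandidate (bif i then Y else X) := by
  cases i <;> assumption

theorem sn_of_forall_subst_mem (h : ∀ s ∈ X, t.subst 0 s ∈ Y) : SN t :=
  -- Variables lie in every candidate, so one of them can be substituted for the bound variable.
  (IsCandidate.sn (h _ (IsCandidate.var_mem X 0))).of_subst

theorem pair_mem_pairCand : .pair sg t s ∈ pairCand sg X Y ↔ t ∈ X ∧ s ∈ Y := by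
  constructor
  · intro h
    simpa using (isNeutral_or_mem_of_mem_introCand h).resolve_left id
  · rintro ⟨ht, hs⟩
    refine subset_introCand ?_ ?_ ⟨t, ht, s, hs, rfl⟩
    · rintro _ ⟨t, ht, s, hs, rfl⟩
      exact (IsCandidate.sn ht).pair (IsCandidate.sn hs)
    · rintro _ ⟨t, ht, s, hs, rfl⟩ r hr
      cases hr with
      | pairCL h => exact ⟨_, IsCandidate.red ht h, s, hs, rfl⟩
      | pairCR h => exact ⟨t, ht, _, IsCandidate.red hs h, rfl⟩

theorem inj_mem_injCand {i : Bool} :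
    .inj sg i t ∈ injCand sg X Y ↔ t ∈ bif i then Y else X := by
  constructor
  · intro h
    obtain ⟨_, _, ht, ⟨⟩⟩ := (isNeutral_or_mem_of_mem_introCand h).resolve_left id
    exact ht
  · intro ht
    refine subset_introCand ?_ ?_ ⟨i, t, ht, rfl⟩
    · rintro _ ⟨i, t, ht, rfl⟩
      exact (IsCandidate.sn ht).inj
    · rintro _ ⟨i, t, ht, rfl⟩ r hr
      cases hr with
      | injC h => exact ⟨i, _, IsCandidate.red ht h, rfl⟩

theorem negi_mem_negCand : .negi sg t ∈ negCand sg X ↔ t ∈ X := by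
  constructor
  · intro h
    simpa using (isNeutral_or_mem_of_mem_introCand h).resolve_left id
  · intro ht
    refine subset_introCand ?_ ?_ ⟨t, ht, rfl⟩
    · rintro _ ⟨t, ht, rfl⟩
      exact (IsCandidate.sn ht).negi
    · rintro _ ⟨t, ht, rfl⟩ r hr
      cases hr with
      | negiC h => exact ⟨_, IsCandidate.red ht h, rfl⟩

theorem lam_mem_lamCand : .lam sg P t ∈ lamCand sg X Y ↔ ∀ s ∈ X, t.subst 0 s ∈ Y := by
  constructor
  · intro h
    simpa using (isNeutral_or_mem_of_mem_introCand h).resolve_left id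
  · intro ht
    refine subset_introCand ?_ ?_ ⟨P, t, rfl, ht⟩
    · rintro _ ⟨P, t, rfl, ht⟩
      exact (sn_of_forall_subst_mem ht).lam
    · rintro _ ⟨P, t, rfl, ht⟩ r hr
      cases hr with
      | lamC h => exact ⟨P, _, rfl, red_forall_subst_mem ht h⟩

theorem proj_mem_of_mem_pairCand {i : Bool} (ht : t ∈ pairCand sg X Y) :
    .proj sg i t ∈ bif i then Y else X := by
  induction IsCandidate.sn ht with
  | intro t _ ih =>
    refine IsCandidate.of_neutral trivial fun r hr => ?_
    cases hr with
    | proj1 => exact (pair_mem_pairCand.mp ht).1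
    | proj2 => exact (pair_mem_pairCand.mp ht).2
    | projC h => exact ih _ h (IsCandidate.red ht h)

theorem nege_mem_of_mem_negCand (ht : t ∈ negCand sg X) : .nege sg t ∈ X := by
  induction IsCandidate.sn ht with
  | intro t _ ih =>
    refine IsCandidate.of_neutral trivial fun r hr => ?_
    cases hr with
    | negRed => exact negi_mem_negCand.mp ht
    | negeC h => exact ih _ h (IsCandidate.red ht h)

theorem app_mem_of_mem_lamCand (ht : t ∈ lamCand sg X Y) (hs : s ∈ X) : .app sg t s ∈ Y := by
  induction IsCandidate.sn ht generalizing s with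
  | intro t _ iht =>
    induction IsCandidate.sn hs with
    | intro s _ ihs =>
      refine IsCandidate.of_neutral trivial fun r hr => ?_
      cases hr with
      | beta => exact lam_mem_lamCand.mp ht s hs
      | appCL h => exact iht _ h (IsCandidate.red ht h) hs
      | appCR h => exact ihs _ h (IsCandidate.red hs h)

theorem case_mem_of_mem_injCand (ht : t ∈ injCand sg X Y) (hs : ∀ w ∈ X, s.subst 0 w ∈ Z)
    (hu : ∀ w ∈ Y, u.subst 0 w ∈ Z) : .case sg t P s Q u ∈ Z := by
  induction IsCandidate.sn ht generalizing s u with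
  | intro t _ iht =>
    induction sn_of_forall_subst_mem hs generalizing u with
    | intro s _ ihs =>
      induction sn_of_forall_subst_mem hu with
      | intro u _ ihu =>
        refine IsCandidate.of_neutral trivial fun r hr => ?_
        cases hr with
        | case1 => exact hs _ (inj_mem_injCand.mp ht)
        | case2 => exact hu _ (inj_mem_injCand.mp ht)
        | caseC1 h => exact iht _ h (IsCandidate.red ht h) hs hu
        | caseC2 h => exact ihs _ h (red_forall_subst_mem hs h) hu
        | caseC3 h => exact ihu _ h (red_forall_subst_mem hu h)

end Connectives

theorem Red.exists_eq_abs {Q : MProp} {t s r : Tm} (h : Red (.abs Q t s) r) :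
    ∃ t' s', r = .abs Q t' s' := by
  cases h <;> exact ⟨_, _, rfl⟩

-- Every reduct of an `abs` is again an `abs`, hence neutral.
theorem SN.abs_mem {X : Set Tm} [IsCandidate X] {Q : MProp} {t s : Tm} (h : SN (.abs Q t s)) :
    .abs Q t s ∈ X := by
  generalize hu : Tm.abs Q t s = u at h
  induction h generalizing t s with
  | intro u _ ih =>
    subst hu
    refine IsCandidate.of_neutral trivial fun r hr => ?_
    obtain ⟨t', s', rfl⟩ := hr.exists_eq_abs
    exact ih _ hr rfl

/-! ### Orthogonal sets -/

/-- Two sets of terms are orthogonal when confronting a term of one with a term of the other by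
`abs` is strongly normalizing. -/
def Orthogonal (X Y : Set Tm) : Prop := ∀ t ∈ X, ∀ s ∈ Y, ∀ Q, SN (.abs Q t s)

theorem orthogonal_introCand {W W' : Set Tm}
    (H : ∀ t ∈ W, ∀ s ∈ W', ∀ Q, (∀ t', Red t t' → SN (.abs Q t' s)) →
      (∀ s', Red s s' → SN (.abs Q t s')) → SN (.abs Q t s)) :
    Orthogonal (introCand W) (introCand W') := by
  intro t ht s hs Q
  induction IsCandidate.sn ht generalizing s with
  | intro t _ iht =>
    induction IsCandidate.sn hs with
    | intro s _ ihs =>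
      have hl t' (h : Red t t') : SN (.abs Q t' s) := iht t' h (IsCandidate.red ht h) s hs
      have hr s' (h : Red s s') : SN (.abs Q t s') := ihs s' h (IsCandidate.red hs h)
      have hneutral (hn : t.IsNeutral ∨ s.IsNeutral) : SN (.abs Q t s) := by
        refine ⟨_, fun r h => ?_⟩
        cases h with
        | absCL h => exact hl _ h
        | absCR h => exact hr _ h
        | _ => exact hn.elim False.elim False.elim
      rcases isNeutral_or_mem_of_mem_introCand ht with hn | htW
      · exact hneutral (.inl hn)
      rcases isNeutral_or_mem_of_mem_introCand hs with hn | hsW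
      · exact hneutral (.inr hn)
      exact H t htW s hsW Q hl hr

section Orthogonal

variable {sg : Sign} {X X' Y Y' : Set Tm}

theorem orthogonal_pairCand_injCand (hX : ∀ t ∈ X, ∀ s ∈ X', ∀ Q, SN (absE Q sg t s))
    (hY : ∀ t ∈ Y, ∀ s ∈ Y', ∀ Q, SN (absE Q sg t s)) :
    Orthogonal (pairCand sg X Y) (injCand sg.flip X' Y') := by
  refine orthogonal_introCand ?_
  rintro _ ⟨t₁, ht₁, t₂, ht₂, rfl⟩ _ ⟨i, s, hs, rfl⟩ Q hl hr
  refine ⟨_, fun r h => ?_⟩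
  cases h with
  | absPairInj1 => exact hX t₁ ht₁ s hs Q
  | absPairInj2 => exact hY t₂ ht₂ s hs Q
  | absCL h => exact hl _ h
  | absCR h => exact hr _ h

theorem orthogonal_injCand_pairCand (hX : ∀ t ∈ X, ∀ s ∈ X', ∀ Q, SN (absE Q sg t s))
    (hY : ∀ t ∈ Y, ∀ s ∈ Y', ∀ Q, SN (absE Q sg t s)) :
    Orthogonal (injCand sg X Y) (pairCand sg.flip X' Y') := by
  refine orthogonal_introCand ?_
  rintro _ ⟨i, t, ht, rfl⟩ _ ⟨s₁, hs₁, s₂, hs₂, rfl⟩ Q hl hr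
  refine ⟨_, fun r h => ?_⟩
  cases h with
  | absInjPair1 => exact hX t ht s₁ hs₁ Q
  | absInjPair2 => exact hY t ht s₂ hs₂ Q
  | absCL h => exact hl _ h
  | absCR h => exact hr _ h

theorem orthogonal_negCand (hX : ∀ t ∈ X, ∀ s ∈ X', ∀ Q, SN (absE Q sg.flip t s)) :
    Orthogonal (negCand sg X) (negCand sg.flip X') := by
  refine orthogonal_introCand ?_
  rintro _ ⟨t, ht, rfl⟩ _ ⟨s, hs, rfl⟩ Q hl hr
  refine ⟨_, fun r h => ?_⟩
  cases h with
  | absNeg => exact hX t ht s hs Q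
  | absCL h => exact hl _ h
  | absCR h => exact hr _ h

end Orthogonal

/-! ### Interpretation of the types -/

theorem Sign.flip_flip (sg : Sign) : sg.flip.flip = sg := by cases sg <;> rfl

section Classical

variable (S : Sign → Set Tm)

/-- The operator `X ↦ ((X → S⁻) → S⁺)` whose least fixed point interprets `A⊕`, for `S⁺` and `S⁻`
the candidates of `A⁺` and `A⁻`. -/
def classicalOp : Set Tm →o Set Tm where
  toFun X := lamCand .pos (lamCand .neg X (S .neg)) (S .pos)
  monotone' _ _ h := lamCand_antitone (lamCand_antitone h)

/-- The candidates of `A⊕` and `A⊖`, given those of `A⁺` and `A⁻`. -/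
def classicalCand : Sign → Set Tm
  | .pos => (classicalOp S).lfp
  | .neg => lamCand .neg (classicalOp S).lfp (S .neg)

theorem classicalCand_eq_lamCand (sg : Sign) :
    classicalCand S sg = lamCand sg (classicalCand S sg.flip) (S sg) := by
  cases sg with
  | pos => exact (classicalOp S).map_lfp.symm
  | neg => rfl

instance (sg : Sign) : IsCandidate (classicalCand S sg) := by
  rw [classicalCand_eq_lamCand]; infer_instance

variable {S} {sg : Sign} {t s : Tm}

theorem app_mem_of_mem_classicalCand [IsCandidate (S sg)] (ht : t ∈ classicalCand S sg)
    (hs : s ∈ classicalCand S sg.flip) : .app sg t s ∈ S sg := by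
  rw [classicalCand_eq_lamCand] at ht
  exact app_mem_of_mem_lamCand ht hs

theorem lam_mem_classicalCand [IsCandidate (S sg)] {P : MProp}
    (h : ∀ s ∈ classicalCand S sg.flip, t.subst 0 s ∈ S sg) :
    .lam sg P t ∈ classicalCand S sg := by
  rw [classicalCand_eq_lamCand]
  exact lam_mem_lamCand.mpr h

theorem Orthogonal.sn_absE [∀ sg, IsCandidate (S sg)] (hS : Orthogonal (S sg) (S sg.flip)) :
    ∀ t ∈ classicalCand S sg, ∀ s ∈ classicalCand S sg.flip, ∀ Q, SN (absE Q sg t s) :=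
  fun t ht s hs Q =>
    have ht' : t ∈ classicalCand S sg.flip.flip := by rwa [Sign.flip_flip]
    hS _ (app_mem_of_mem_classicalCand ht hs) _ (app_mem_of_mem_classicalCand hs ht') Q

end Classical

/-- The candidates of `A⁺` and `A⁻`. -/
def PureProp.strongCand : PureProp → Sign → Set Tm
  | .var _, _ => introCand ∅
  | .conj A B, .pos =>
      pairCand .pos (classicalCand A.strongCand .pos) (classicalCand B.strongCand .pos)
  | .conj A B, .neg =>
      injCand .neg (classicalCand A.strongCand .neg) (classicalCand B.strongCand .neg)
  | .disj A B, .pos =>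
      injCand .pos (classicalCand A.strongCand .pos) (classicalCand B.strongCand .pos)
  | .disj A B, .neg =>
      pairCand .neg (classicalCand A.strongCand .neg) (classicalCand B.strongCand .neg)
  | .neg A, sg => negCand sg (classicalCand A.strongCand sg.flip)

instance (A : PureProp) (sg : Sign) : IsCandidate (A.strongCand sg) := by
  cases A <;> cases sg <;> exact inferInstanceAs (IsCandidate (introCand _))

theorem PureProp.orthogonal_strongCand (A : PureProp) (sg : Sign) :
    Orthogonal (A.strongCand sg) (A.strongCand sg.flip) := by
  induction A generalizing sg with
  | var => exact orthogonal_introCand fun _ h => h.elim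
  | conj A B hA hB =>
    cases sg with
    | pos => exact orthogonal_pairCand_injCand (hA .pos).sn_absE (hB .pos).sn_absE
    | neg => exact orthogonal_injCand_pairCand (hA .neg).sn_absE (hB .neg).sn_absE
  | disj A B hA hB =>
    cases sg with
    | pos => exact orthogonal_injCand_pairCand (hA .pos).sn_absE (hB .pos).sn_absE
    | neg => exact orthogonal_pairCand_injCand (hA .neg).sn_absE (hB .neg).sn_absE
  | neg A hA => exact orthogonal_negCand (hA sg.flip).sn_absE

/-- The candidate interpreting a moded proposition. -/
def MProp.cand : MProp → Set Tm
  | .sp A => A.strongCand .pos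
  | .sn A => A.strongCand .neg
  | .cp A => classicalCand A.strongCand .pos
  | .cn A => classicalCand A.strongCand .neg

instance (P : MProp) : IsCandidate P.cand := by
  cases P <;> simp only [MProp.cand] <;> infer_instance

theorem MProp.orthogonal_cand_opp {P : MProp} (hP : P.isStrong) : Orthogonal P.cand P.opp.cand := by
  cases P with
  | sp A => exact A.orthogonal_strongCand .pos
  | sn A => exact A.orthogonal_strongCand .neg
  | cp A => exact hP.elim
  | cn A => exact hP.elim

/-! ### Adequacy -/

/-- The parallel substitutions sending each variable of `Γ` into the candidate of its type. -/
def candSubsts (Γ : List MProp) : Set (ℕ → Tm) :=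
  {σ | ∀ n P, Γ[n]? = some P → σ n ∈ P.cand}

section Adequacy

variable {Γ : List MProp} {t : Tm} {P Q : MProp} {σ : ℕ → Tm}

theorem consSubst_mem_candSubsts (hσ : σ ∈ candSubsts Γ) {s : Tm} (hs : s ∈ P.cand) :
    consSubst s σ ∈ candSubsts (P :: Γ) := by
  intro n Q hn
  cases n with
  | zero =>
    obtain rfl : P = Q := by simpa using hn
    exact hs
  | succ n => exact hσ n Q (by simpa using hn)

theorem subst_mem_cand_of_psubst (h : ∀ σ ∈ candSubsts (P :: Γ), t.psubst σ ∈ Q.cand)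
    (hσ : σ ∈ candSubsts Γ) : ∀ s ∈ P.cand, (t.psubst (upSubst σ)).subst 0 s ∈ Q.cand := by
  intro s hs
  rw [Tm.subst_psubst_upSubst]
  exact h _ (consSubst_mem_candSubsts hσ hs)

theorem TJ.psubst_mem_cand (h : TJ Γ t P) : ∀ σ ∈ candSubsts Γ, t.psubst σ ∈ P.cand := by
  induction h with intro σ hσ
  | var h => exact hσ _ _ h
  | absT hP _ _ iht ihs =>
    exact SN.abs_mem (MProp.orthogonal_cand_opp hP _ (iht σ hσ) _ (ihs σ hσ) _)
  | pairP _ _ iht ihs | pairN _ _ iht ihs =>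
    exact pair_mem_pairCand.mpr ⟨iht σ hσ, ihs σ hσ⟩
  | projP1 _ ih | projN1 _ ih => exact proj_mem_of_mem_pairCand (i := false) (ih σ hσ)
  | projP2 _ ih | projN2 _ ih => exact proj_mem_of_mem_pairCand (i := true) (ih σ hσ)
  | injP1 _ ih | injN1 _ ih => exact inj_mem_injCand (i := false).mpr (ih σ hσ)
  | injP2 _ ih | injN2 _ ih => exact inj_mem_injCand (i := true).mpr (ih σ hσ)
  | caseP _ _ _ iht ihs ihu | caseN _ _ _ iht ihs ihu =>
    exact case_mem_of_mem_injCand (iht σ hσ) (subst_mem_cand_of_psubst ihs hσ)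
      (subst_mem_cand_of_psubst ihu hσ)
  | negiP _ ih | negiN _ ih => exact negi_mem_negCand.mpr (ih σ hσ)
  | negeP _ ih | negeN _ ih => exact nege_mem_of_mem_negCand (ih σ hσ)
  | @lamP _ _ A _ ih =>
    exact lam_mem_classicalCand (S := A.strongCand) (sg := .pos) (subst_mem_cand_of_psubst ih hσ)
  | @lamN _ _ A _ ih =>
    exact lam_mem_classicalCand (S := A.strongCand) (sg := .neg) (subst_mem_cand_of_psubst ih hσ)
  | appP _ _ iht ihs | appN _ _ iht ihs =>
    exact app_mem_of_mem_classicalCand (iht σ hσ) (ihs σ hσ)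

theorem var_mem_candSubsts (Γ : List MProp) : Tm.var ∈ candSubsts Γ :=
  fun n P _ => IsCandidate.var_mem P.cand n

theorem TJ.sn (h : TJ Γ t P) : SN t :=
  (IsCandidate.sn (h.psubst_mem_cand Tm.var (var_mem_candSubsts Γ))).of_psubst

end Adequacy

/-- Strong normalization of λPRK: no infinite reduction sequence from a typable term. -/
theorem lambdaPRK_strongly_normalizing {Γ : List MProp} {t : Tm} {P : MProp}
    (ht : TJ Γ t P) :
    ¬ ∃ f : ℕ → Tm, f 0 = t ∧ ∀ n, Red (f n) (f (n + 1)) := by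
  rintro ⟨f, h0, hf⟩
  exact not_acc_iff_exists_descending_chain.mpr ⟨f, h0, hf⟩ ht.sn
end

section
/- PRK is a conservative extension of classical propositional logic: define χ(A⊕)=χ(A⁺)=A and χ(A⊖)=χ(A⁻)=¬A. If P₁,…,Pₙ ⊢ Q is derivable in PRK, then χ(Q) is a classical (truth-table) consequence of χ(P₁),…,χ(Pₙ): for every valuation v assigning a Boolean truth value to each propositional variable (extended to pure propositions by the usual truth tables for ∧, ∨, ¬), if v satisfies each χ(Pᵢ) then v satisfies χ(Q). -/
/-- Derivability in system PRK (natural deduction), Γ a finite set of moded propositions. -/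
inductive PRK : Finset MProp → MProp → Prop
  | ax {Γ : Finset MProp} {P : MProp} : P ∈ Γ → PRK Γ P
  | abs {Γ : Finset MProp} {P Q : MProp} :
      P.isStrong → PRK Γ P → PRK Γ P.opp → PRK Γ Q
  | iConjP {Γ A B} : PRK Γ (MProp.cp A) → PRK Γ (MProp.cp B) → PRK Γ (MProp.sp (PureProp.conj A B))
  | eConjP1 {Γ A B} : PRK Γ (MProp.sp (PureProp.conj A B)) → PRK Γ (MProp.cp A)
  | eConjP2 {Γ A B} : PRK Γ (MProp.sp (PureProp.conj A B)) → PRK Γ (MProp.cp B)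
  | iDisjP1 {Γ A B} : PRK Γ (MProp.cp A) → PRK Γ (MProp.sp (PureProp.disj A B))
  | iDisjP2 {Γ A B} : PRK Γ (MProp.cp B) → PRK Γ (MProp.sp (PureProp.disj A B))
  | eDisjP {Γ A B P} : PRK Γ (MProp.sp (PureProp.disj A B)) →
      PRK (insert (MProp.cp A) Γ) P → PRK (insert (MProp.cp B) Γ) P → PRK Γ P
  | iNegP {Γ A} : PRK Γ (MProp.cn A) → PRK Γ (MProp.sp (PureProp.neg A))
  | eNegP {Γ A} : PRK Γ (MProp.sp (PureProp.neg A)) → PRK Γ (MProp.cn A)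
  | icP {Γ A} : PRK (insert (MProp.cn A) Γ) (MProp.sp A) → PRK Γ (MProp.cp A)
  | ecP {Γ A} : PRK Γ (MProp.cp A) → PRK Γ (MProp.cn A) → PRK Γ (MProp.sp A)
  | iDisjN {Γ A B} : PRK Γ (MProp.cn A) → PRK Γ (MProp.cn B) → PRK Γ (MProp.sn (PureProp.disj A B))
  | eDisjN1 {Γ A B} : PRK Γ (MProp.sn (PureProp.disj A B)) → PRK Γ (MProp.cn A)
  | eDisjN2 {Γ A B} : PRK Γ (MProp.sn (PureProp.disj A B)) → PRK Γ (MProp.cn B)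
  | iConjN1 {Γ A B} : PRK Γ (MProp.cn A) → PRK Γ (MProp.sn (PureProp.conj A B))
  | iConjN2 {Γ A B} : PRK Γ (MProp.cn B) → PRK Γ (MProp.sn (PureProp.conj A B))
  | eConjN {Γ A B P} : PRK Γ (MProp.sn (PureProp.conj A B)) →
      PRK (insert (MProp.cn A) Γ) P → PRK (insert (MProp.cn B) Γ) P → PRK Γ P
  | iNegN {Γ A} : PRK Γ (MProp.cp A) → PRK Γ (MProp.sn (PureProp.neg A))
  | eNegN {Γ A} : PRK Γ (MProp.sn (PureProp.neg A)) → PRK Γ (MProp.cp A)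
  | icN {Γ A} : PRK (insert (MProp.cp A) Γ) (MProp.sn A) → PRK Γ (MProp.cn A)
  | ecN {Γ A} : PRK Γ (MProp.cn A) → PRK Γ (MProp.cp A) → PRK Γ (MProp.sn A)

/-- χ maps a moded proposition to a pure proposition: χ(A⁺)=χ(A⊕)=A, χ(A⁻)=χ(A⊖)=¬A. -/
def chi : MProp → PureProp
  | .sp A => A
  | .cp A => A
  | .sn A => .neg A
  | .cn A => .neg A

/-- Truth-table evaluation of pure propositions under a Boolean valuation. -/
def PureProp.eval (v : ℕ → Bool) : PureProp → Bool
  | .var a => v a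
  | .conj A B => A.eval v && B.eval v
  | .disj A B => A.eval v || B.eval v
  | .neg A => ! A.eval v

/-!
Since `χ` forgets strength, (EC) is immediate and the opposite of a moded proposition holds exactly
when the proposition itself fails. Hence (Abs) is explosion and (IC) is reasoning by contradiction,
while the rules for the connectives are their truth tables, with the De Morgan laws accounting for
the negative signs.
-/

namespace MProp

variable {v : ℕ → Bool} {Γ : Finset MProp} {P Q R : MProp} {A B : PureProp}

/-- Truth of a moded proposition under a Boolean valuation, read through its classical
translation `χ`. -/
def Holds (v : ℕ → Bool) (P : MProp) : Prop :=
  (chi P).eval v = true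

theorem holds_opp : P.opp.Holds v ↔ ¬ P.Holds v := by
  cases P <;> simp [Holds, opp, chi, PureProp.eval]

theorem holds_sp_iff_holds_cp : (sp A).Holds v ↔ (cp A).Holds v :=
  Iff.rfl

theorem holds_sn_iff_holds_cn : (sn A).Holds v ↔ (cn A).Holds v :=
  Iff.rfl

theorem holds_sp_conj : (sp (.conj A B)).Holds v ↔ (cp A).Holds v ∧ (cp B).Holds v := by
  simp [Holds, chi, PureProp.eval]

theorem holds_sp_disj : (sp (.disj A B)).Holds v ↔ (cp A).Holds v ∨ (cp B).Holds v := by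
  simp [Holds, chi, PureProp.eval]

theorem holds_sp_neg : (sp (.neg A)).Holds v ↔ (cn A).Holds v :=
  Iff.rfl

theorem holds_sn_conj : (sn (.conj A B)).Holds v ↔ (cn A).Holds v ∨ (cn B).Holds v := by
  simp [Holds, chi, PureProp.eval]

theorem holds_sn_disj : (sn (.disj A B)).Holds v ↔ (cn A).Holds v ∧ (cn B).Holds v := by
  simp [Holds, chi, PureProp.eval]

theorem holds_sn_neg : (sn (.neg A)).Holds v ↔ (cp A).Holds v := by
  simp [Holds, chi, PureProp.eval]

/-- Classical consequence between moded propositions: `χ(Q)` is true under every valuation that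
makes `χ(P)` true for all `P ∈ Γ`. -/
def Entails (Γ : Finset MProp) (Q : MProp) : Prop :=
  ∀ v, (∀ P ∈ Γ, P.Holds v) → Q.Holds v

namespace Entails

theorem of_mem (hP : P ∈ Γ) : Entails Γ P :=
  fun _ hΓ => hΓ P hP

theorem imp (h : Entails Γ P) (hPQ : ∀ {v}, P.Holds v → Q.Holds v) : Entails Γ Q :=
  fun v hΓ => hPQ (h v hΓ)

theorem imp₂ (hP : Entails Γ P) (hQ : Entails Γ Q)
    (hR : ∀ {v}, P.Holds v → Q.Holds v → R.Holds v) : Entails Γ R :=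
  fun v hΓ => hR (hP v hΓ) (hQ v hΓ)

theorem explosion (hP : Entails Γ P) (hPopp : Entails Γ P.opp) : Entails Γ Q :=
  fun v hΓ => absurd (hP v hΓ) (holds_opp.1 (hPopp v hΓ))

theorem or_elim (h : Entails Γ R) (hR : ∀ {v}, R.Holds v → P.Holds v ∨ Q.Holds v)
    {S : MProp} (hP : Entails (insert P Γ) S) (hQ : Entails (insert Q Γ) S) : Entails Γ S :=
  fun v hΓ => (hR (h v hΓ)).elim
    (fun hPv => hP v (Finset.forall_mem_insert _ _ _ |>.2 ⟨hPv, hΓ⟩))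
    (fun hQv => hQ v (Finset.forall_mem_insert _ _ _ |>.2 ⟨hQv, hΓ⟩))

theorem of_insert_opp (h : Entails (insert P.opp Γ) P) : Entails Γ P :=
  fun v hΓ => by_contra fun hP =>
    hP (h v (Finset.forall_mem_insert _ _ _ |>.2 ⟨holds_opp.2 hP, hΓ⟩))

end Entails

end MProp

open MProp in
theorem PRK.entails {Γ : Finset MProp} {Q : MProp} (h : PRK Γ Q) : Entails Γ Q := by
  induction h with
  | ax hP => exact .of_mem hP
  | abs _ _ _ ihP ihPopp => exact ihP.explosion ihPopp
  | iConjP _ _ ihA ihB => exact ihA.imp₂ ihB fun hA hB => holds_sp_conj.2 ⟨hA, hB⟩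
  | eConjP1 _ ih => exact ih.imp fun h => (holds_sp_conj.1 h).1
  | eConjP2 _ ih => exact ih.imp fun h => (holds_sp_conj.1 h).2
  | iDisjP1 _ ih => exact ih.imp fun h => holds_sp_disj.2 (.inl h)
  | iDisjP2 _ ih => exact ih.imp fun h => holds_sp_disj.2 (.inr h)
  | eDisjP _ _ _ ih ihA ihB => exact ih.or_elim holds_sp_disj.1 ihA ihB
  | iNegP _ ih => exact ih.imp holds_sp_neg.2
  | eNegP _ ih => exact ih.imp holds_sp_neg.1
  | icP _ ih => exact .of_insert_opp (ih.imp holds_sp_iff_holds_cp.1)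
  | ecP _ _ ih _ => exact ih.imp holds_sp_iff_holds_cp.2
  | iDisjN _ _ ihA ihB => exact ihA.imp₂ ihB fun hA hB => holds_sn_disj.2 ⟨hA, hB⟩
  | eDisjN1 _ ih => exact ih.imp fun h => (holds_sn_disj.1 h).1
  | eDisjN2 _ ih => exact ih.imp fun h => (holds_sn_disj.1 h).2
  | iConjN1 _ ih => exact ih.imp fun h => holds_sn_conj.2 (.inl h)
  | iConjN2 _ ih => exact ih.imp fun h => holds_sn_conj.2 (.inr h)
  | eConjN _ _ _ ih ihA ihB => exact ih.or_elim holds_sn_conj.1 ihA ihB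
  | iNegN _ ih => exact ih.imp holds_sn_neg.2
  | eNegN _ ih => exact ih.imp holds_sn_neg.1
  | icN _ ih => exact .of_insert_opp (ih.imp holds_sn_iff_holds_cn.1)
  | ecN _ _ ih _ => exact ih.imp holds_sn_iff_holds_cn.2

/-- PRK is a conservative extension of classical propositional logic. -/
theorem prk_conservative (Γ : Finset MProp) (Q : MProp) (h : PRK Γ Q)
    (v : ℕ → Bool) (hv : ∀ P ∈ Γ, (chi P).eval v = true) :
    (chi Q).eval v = true :=
  h.entails v hv
end
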